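/- Let (g,A) be a compatible pair over a field k of characteristic 0 such that g is abelian, i.e. [g,g] = 0. Then for every associative k-algebra F one has (g,A)(F) = Σ_{k≥0} F^(k) ⊗ g^{k+1}. -/

import Mathlib

open Submodule TensorProduct

variable (K : Type*) [Field K]

/-- The span of all products `a * b`, `a ∈ S`, `b ∈ T` (the subspace `S·T`). -/
def pSpan {R : Type*} [NonUnitalRing R] [Module K R] (S T : Submodule K R) : Submodule K R :=
  Submodule.span K {x | ∃ a ∈ S, ∃ b ∈ T, x = a * b}

/-- The span of all commutators `a * b - b * a`, `a ∈ S`, `b ∈ T` (the subspace `[S, T]`). -/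
def bSpan {R : Type*} [NonUnitalRing R] [Module K R] (S T : Submodule K R) : Submodule K R :=
  Submodule.span K {x | ∃ a ∈ S, ∃ b ∈ T, x = a * b - b * a}

/-- The `k`-th commutator space `S^(k)`: `S^(0) = S`, `S^(k) = [S, S^(k-1)]`.
For `S = ⊤` this is the commutator space `F^(k)` of the algebra. -/
def cSp {R : Type*} [NonUnitalRing R] [Module K R] (S : Submodule K R) : ℕ → Submodule K R
  | 0 => S
  | (k+1) => bSpan K S (cSp S k)

/-- `IklS K S ℓ k` is `I_k^ℓ(R, S)`: the sum of `S^(λ₁) ⋯ S^(λ_ℓ)` over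
`λ₁ + ⋯ + λ_ℓ = k`, defined via the recursion `I_k^1 = S^(k)`,
`I_k^ℓ = Σ_{0 ≤ i ≤ k} S^(i) · I_{k-i}^{ℓ-1}`.  The first argument is the
superscript `ℓ`, the second the subscript `k`; the (unused) value at `ℓ = 0` is `⊥`.
For `S = ⊤` this is `I_k^ℓ(F)`. -/
def IklS {R : Type*} [NonUnitalRing R] [Module K R] (S : Submodule K R) :
    ℕ → ℕ → Submodule K R
  | 0, _ => ⊥
  | 1, k => cSp K S k
  | (ℓ+2), k => ∑ i ∈ Finset.range (k+1), pSpan K (cSp K S i) (IklS S (ℓ+1) (k-i))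

/-- `I_k^{≤ℓ}(F) = Σ_{1 ≤ ℓ' ≤ ℓ} I_k^{ℓ'}(F)`. -/
def Ikle {R : Type*} [NonUnitalRing R] [Module K R] (ℓ k : ℕ) : Submodule K R :=
  ∑ ℓ' ∈ Finset.Icc 1 ℓ, IklS K (⊤ : Submodule K R) ℓ' k

/-- `I_k(F) = Σ_{ℓ ≥ 1} I_k^ℓ(F)`. -/
def Ik (R : Type*) [NonUnitalRing R] [Module K R] (k : ℕ) : Submodule K R :=
  ⨆ ℓ : ℕ, IklS K (⊤ : Submodule K R) (ℓ + 1) k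

/-- `g^n`: the span of all products of `n` elements of `g` (set to `⊥` for `n = 0`). -/
def gPow {R : Type*} [NonUnitalRing R] [Module K R] (g : Submodule K R) : ℕ → Submodule K R
  | 0 => ⊥
  | 1 => g
  | (n+2) => pSpan K g (gPow g (n+1))

/-- The Lie subalgebra (under the commutator bracket) generated by a subspace `S`:
the smallest subspace containing `S` and closed under `(x, y) ↦ x * y - y * x`. -/
def lieGen {R : Type*} [NonUnitalRing R] [Module K R] (S : Submodule K R) : Submodule K R :=
  sInf {T | S ≤ T ∧ ∀ x ∈ T, ∀ y ∈ T, x * y - y * x ∈ T}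

/-- The subspace `S ⊗ T` of `F ⊗[K] A`: the span of all pure tensors `f ⊗ a`
with `f ∈ S`, `a ∈ T`. -/
def tSpan {F A : Type*} [AddCommGroup F] [Module K F] [AddCommGroup A] [Module K A]
    (S : Submodule K F) (T : Submodule K A) : Submodule K (F ⊗[K] A) :=
  Submodule.span K {z | ∃ f ∈ S, ∃ a ∈ T, z = f ⊗ₜ[K] a}

/-- The current Lie algebra `(g, A)(F)`: the Lie subalgebra of `F ⊗ A` (with the
commutator bracket) generated by `F ⊗ g`. -/
def currentLie {F A : Type*} [NonUnitalRing F] [Module K F] [SMulCommClass K F F]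
    [IsScalarTower K F F] [Ring A] [Algebra K A] (g : Submodule K A) :
    Submodule K (F ⊗[K] A) :=
  lieGen K (tSpan K (⊤ : Submodule K F) g)

/-!
By the Jacobi identity, the right-normed commutators `[x₀, [x₁, …, [xₖ₋₁, xₖ]]]` of elements of a
subspace `L` span the Lie algebra generated by `L`, so this Lie algebra is `Σ_k L^(k)`.
If `g` is commutative, then `[f ⊗ a, f' ⊗ b] = [f, f'] ⊗ ab` for `a ∈ g` and `b ∈ g^(k+1)`, hence
`(S ⊗ g)^(k) = S^(k) ⊗ g^(k+1)` by induction on `k`.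
-/

section Commutators

variable {K} {R : Type*} [NonUnitalRing R] [Module K R]

theorem commutator_mem_bSpan {S T : Submodule K R} {a b : R} (ha : a ∈ S) (hb : b ∈ T) :
    a * b - b * a ∈ bSpan K S T :=
  subset_span ⟨a, ha, b, hb, rfl⟩

theorem bSpan_le {S T U : Submodule K R} :
    bSpan K S T ≤ U ↔ ∀ a ∈ S, ∀ b ∈ T, a * b - b * a ∈ U := by
  refine ⟨fun h a ha b hb => h (commutator_mem_bSpan ha hb), fun h => span_le.2 ?_⟩
  rintro _ ⟨a, ha, b, hb, rfl⟩
  exact h a ha b hb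

theorem bSpan_mono {S S' T T' : Submodule K R} (hS : S ≤ S') (hT : T ≤ T') :
    bSpan K S T ≤ bSpan K S' T' :=
  bSpan_le.2 fun _ ha _ hb => commutator_mem_bSpan (hS ha) (hT hb)

theorem bSpan_eq_bot_iff {S T : Submodule K R} :
    bSpan K S T = ⊥ ↔ ∀ a ∈ S, ∀ b ∈ T, Commute a b := by
  simp only [eq_bot_iff, bSpan_le, mem_bot, sub_eq_zero, commute_iff_eq]

theorem le_lieGen (L : Submodule K R) : L ≤ lieGen K L :=
  le_sInf fun _ hT => hT.1

theorem lieGen_le {L T : Submodule K R} (hL : L ≤ T) (hT : bSpan K T T ≤ T) : lieGen K L ≤ T :=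
  sInf_le ⟨hL, bSpan_le.1 hT⟩

theorem bSpan_lieGen_le (L : Submodule K R) : bSpan K (lieGen K L) (lieGen K L) ≤ lieGen K L :=
  bSpan_le.2 fun x hx y hy =>
    mem_sInf.2 fun T hT => hT.2 x (mem_sInf.1 hx T hT) y (mem_sInf.1 hy T hT)

theorem cSp_le_lieGen (L : Submodule K R) (k : ℕ) : cSp K L k ≤ lieGen K L := by
  induction k with
  | zero => exact le_lieGen L
  | succ k ih => exact (bSpan_mono (le_lieGen L) ih).trans (bSpan_lieGen_le L)

variable [SMulCommClass K R R] [IsScalarTower K R R]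

variable (K R) in
/-- The commutator `(a, b) ↦ a * b - b * a` as a bilinear map. It presents `bSpan` as a
`Submodule.map₂`. -/
def commutatorBilin : R →ₗ[K] R →ₗ[K] R :=
  LinearMap.mul K R - (LinearMap.mul K R).flip

theorem commutatorBilin_apply (a b : R) : commutatorBilin K R a b = a * b - b * a :=
  rfl

theorem bSpan_eq_map₂ (S T : Submodule K R) :
    bSpan K S T = map₂ (commutatorBilin K R) S T :=
  le_antisymm (bSpan_le.2 fun _ ha _ hb => apply_mem_map₂ (commutatorBilin K R) ha hb)
    (map₂_le.2 fun _ ha _ hb => commutator_mem_bSpan ha hb)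

theorem bSpan_span_span (s t : Set R) :
    bSpan K (span K s) (span K t) = span K (Set.image2 (fun a b => a * b - b * a) s t) :=
  (bSpan_eq_map₂ _ _).trans (map₂_span_span K (commutatorBilin K R) s t)

theorem bSpan_iSup_iSup {ι κ : Sort*} (S : ι → Submodule K R) (T : κ → Submodule K R) :
    bSpan K (⨆ i, S i) (⨆ j, T j) = ⨆ i, ⨆ j, bSpan K (S i) (T j) := by
  simp_rw [bSpan_eq_map₂, map₂_iSup_left, map₂_iSup_right]

theorem bSpan_bSpan_le (S T U : Submodule K R) :
    bSpan K (bSpan K S T) U ≤ bSpan K S (bSpan K T U) ⊔ bSpan K T (bSpan K S U) := by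
  refine bSpan_le.2 fun x hx u hu => ?_
  suffices bSpan K S T ≤ (bSpan K S (bSpan K T U) ⊔ bSpan K T (bSpan K S U)).comap
      ((commutatorBilin K R).flip u) from this hx
  refine bSpan_le.2 fun a ha b hb => ?_
  have jacobi : (a * b - b * a) * u - u * (a * b - b * a) =
      (a * (b * u - u * b) - (b * u - u * b) * a) -
        (b * (a * u - u * a) - (a * u - u * a) * b) := by
    noncomm_ring
  rw [mem_comap, LinearMap.flip_apply, commutatorBilin_apply, jacobi]
  exact sub_mem (mem_sup_left (commutator_mem_bSpan ha (commutator_mem_bSpan hb hu)))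
    (mem_sup_right (commutator_mem_bSpan hb (commutator_mem_bSpan ha hu)))

theorem bSpan_cSp_cSp_le (L : Submodule K R) (i j : ℕ) :
    bSpan K (cSp K L i) (cSp K L j) ≤ cSp K L (i + j + 1) := by
  induction i generalizing j with
  | zero => rw [Nat.zero_add]; exact le_rfl
  | succ i ih =>
    calc bSpan K (bSpan K L (cSp K L i)) (cSp K L j)
        ≤ bSpan K L (bSpan K (cSp K L i) (cSp K L j)) ⊔ bSpan K (cSp K L i) (cSp K L (j + 1)) :=
          bSpan_bSpan_le L (cSp K L i) (cSp K L j)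
      _ ≤ cSp K L (i + j + 1 + 1) ⊔ cSp K L (i + (j + 1) + 1) :=
          sup_le_sup (bSpan_mono le_rfl (ih j)) (ih (j + 1))
      _ = cSp K L (i + 1 + j + 1) := by
          rw [← Nat.add_assoc i j 1, sup_idem, Nat.add_right_comm i j 1]

theorem lieGen_eq_iSup_cSp (L : Submodule K R) : lieGen K L = ⨆ k, cSp K L k := by
  refine le_antisymm (lieGen_le (le_iSup (cSp K L) 0) ?_) (iSup_le (cSp_le_lieGen L))
  rw [bSpan_iSup_iSup]
  exact iSup₂_le fun i j => (bSpan_cSp_cSp_le L i j).trans (le_iSup (cSp K L) (i + j + 1))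

end Commutators

section Powers

variable {K} {A : Type*} [NonUnitalRing A] [Module K A] [SMulCommClass K A A]
  [IsScalarTower K A A]

theorem gPow_le_adjoin (g : Submodule K A) (n : ℕ) :
    gPow K g n ≤ (NonUnitalAlgebra.adjoin K (g : Set A)).toSubmodule := by
  induction n using gPow.induct with
  | case1 => exact bot_le
  | case2 => exact NonUnitalAlgebra.subset_adjoin K
  | case3 n ih =>
    refine span_le.2 ?_
    rintro _ ⟨a, ha, b, hb, rfl⟩
    exact (NonUnitalAlgebra.adjoin K (g : Set A)).mul_mem
      (NonUnitalAlgebra.subset_adjoin K ha) (ih hb)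

theorem commute_of_mem_gPow {g : Submodule K A} {n : ℕ} {a b : A}
    (ha : ∀ c ∈ g, Commute a c) (hb : b ∈ gPow K g n) : Commute a b :=
  NonUnitalAlgebra.commute_of_mem_adjoin_of_forall_mem_commute (gPow_le_adjoin g n hb) ha

end Powers

section Tensors

variable {K}

theorem tSpan_span_span {M N : Type*} [AddCommGroup M] [Module K M] [AddCommGroup N] [Module K N]
    (s : Set M) (t : Set N) :
    tSpan K (span K s) (span K t) = span K (Set.image2 (· ⊗ₜ[K] ·) s t) := by
  have tSpan_eq_map₂ :
      tSpan K (span K s) (span K t) = map₂ (TensorProduct.mk K M N) (span K s) (span K t) := by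
    simp only [map₂_eq_span_image2, tSpan, Set.image2, TensorProduct.mk_apply, SetLike.mem_coe,
      eq_comm]
  exact tSpan_eq_map₂.trans (map₂_span_span K (TensorProduct.mk K M N) s t)

variable {F : Type*} [NonUnitalRing F] [Module K F] [SMulCommClass K F F] [IsScalarTower K F F]
variable {A : Type*} [NonUnitalRing A] [Module K A] [SMulCommClass K A A] [IsScalarTower K A A]

theorem commutator_tmul_tmul {a b : A} (hab : Commute a b) (f f' : F) :
    f ⊗ₜ[K] a * f' ⊗ₜ[K] b - f' ⊗ₜ[K] b * f ⊗ₜ[K] a = (f * f' - f' * f) ⊗ₜ[K] (a * b) := by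
  rw [Algebra.TensorProduct.tmul_mul_tmul, Algebra.TensorProduct.tmul_mul_tmul, ← hab.eq,
    TensorProduct.sub_tmul]

theorem bSpan_tSpan_tSpan (S S' : Submodule K F) {T T' : Submodule K A}
    (hT : ∀ a ∈ T, ∀ b ∈ T', Commute a b) :
    bSpan K (tSpan K S T) (tSpan K S' T') = tSpan K (bSpan K S S') (pSpan K T T') := by
  refine (bSpan_span_span _ _).trans (Eq.trans ?_ (tSpan_span_span _ _).symm)
  congr 1
  ext z
  constructor
  · rintro ⟨_, ⟨f, hf, a, ha, rfl⟩, _, ⟨f', hf', b, hb, rfl⟩, rfl⟩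
    exact ⟨_, ⟨f, hf, f', hf', rfl⟩, _, ⟨a, ha, b, hb, rfl⟩,
      (commutator_tmul_tmul (hT a ha b hb) f f').symm⟩
  · rintro ⟨_, ⟨f, hf, f', hf', rfl⟩, _, ⟨a, ha, b, hb, rfl⟩, rfl⟩
    exact ⟨_, ⟨f, hf, a, ha, rfl⟩, _, ⟨f', hf', b, hb, rfl⟩,
      commutator_tmul_tmul (hT a ha b hb) f f'⟩

theorem cSp_tSpan (S : Submodule K F) {g : Submodule K A} (hg : bSpan K g g = ⊥) (k : ℕ) :
    cSp K (tSpan K S g) k = tSpan K (cSp K S k) (gPow K g (k + 1)) := by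
  induction k with
  | zero => rfl
  | succ k ih =>
    have g_commutes_gPow : ∀ a ∈ g, ∀ b ∈ gPow K g (k + 1), Commute a b := fun a ha _ hb =>
      commute_of_mem_gPow (bSpan_eq_bot_iff.1 hg a ha) hb
    calc bSpan K (tSpan K S g) (cSp K (tSpan K S g) k)
        = bSpan K (tSpan K S g) (tSpan K (cSp K S k) (gPow K g (k + 1))) := by rw [ih]
      _ = tSpan K (bSpan K S (cSp K S k)) (pSpan K g (gPow K g (k + 1))) :=
          bSpan_tSpan_tSpan S (cSp K S k) g_commutes_gPow

theorem statement4_general (S : Submodule K F) {g : Submodule K A} (hg : bSpan K g g = ⊥) :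
    lieGen K (tSpan K S g) = ⨆ k : ℕ, tSpan K (cSp K S k) (gPow K g (k + 1)) :=
  (lieGen_eq_iSup_cSp _).trans (iSup_congr (cSp_tSpan S hg))

end Tensors

/-- if `g` is abelian, then `(g,A)(F) = Σ_{k ≥ 0} F^(k) ⊗ g^{k+1}`. -/
theorem statement4 {K : Type*} [Field K] [CharZero K]
    {F : Type*} [NonUnitalRing F] [Module K F] [SMulCommClass K F F] [IsScalarTower K F F]
    {A : Type*} [Ring A] [Algebra K A]
    (g : Submodule K A) (hg : ∀ x ∈ g, ∀ y ∈ g, x * y - y * x ∈ g)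
    (habelian : bSpan K g g = ⊥) :
    currentLie K (F := F) g =
      ⨆ k : ℕ, tSpan K (cSp K (⊤ : Submodule K F) k) (gPow K g (k + 1)) :=
  statement4_general ⊤ habelian
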